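/- Let f(z) = z + Σ_{n≥2} a_n zⁿ be analytic on the open unit disc 𝔻 with Re((1−z)f′(z)) > 0 for all z ∈ 𝔻. Then for every integer n ≥ 2 and every real μ with μ ≥ n²/(2n−1), one has |μ a_n² − a_{2n−1}| ≤ μ(2n−1)²/n² + (3−4n)/(2n−1). -/

import Mathlib

lemma HasSum.congr_zf {u v : ℕ → ℂ} {s : ℂ} (h : HasSum u s) (e : ∀ k, v k = u k) :
    HasSum v s := by
  have : v = u := funext e
  rw [this]; exact h

lemma zf_alg (M N m x y : ℂ) (hM : M ≠ 0) (hN : N ≠ 0) :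
    m * x ^ 2 - y = (m - N ^ 2 / M) / N ^ 2 * (N * x) ^ 2 + ((N * x) ^ 2 - M * y) / M := by
  field_simp; ring

/-- `f` and its derivative as power series. -/
lemma zf_fps (f : ℂ → ℂ) (a : ℕ → ℂ)
    (hf : ∀ z ∈ Metric.ball (0 : ℂ) 1, HasSum (fun k => a k * z ^ k) (f z)) :
    HasFPowerSeriesOnBall f (FormalMultilinearSeries.ofScalars ℂ a) 0 1 := by
  refine ⟨?_, by norm_num, ?_⟩
  · refine ENNReal.le_of_forall_nnreal_lt fun r hr => ?_
    apply FormalMultilinearSeries.le_radius_of_summable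
    have hr' : (r : ℝ) < 1 := by exact_mod_cast hr
    have := (hf (r : ℂ) (by simpa using hr')).summable.norm
    simpa [FormalMultilinearSeries.ofScalars_norm] using this
  · intro y hy
    have hy' : y ∈ Metric.ball (0 : ℂ) 1 := by
      have := Metric.eball_ofReal (x := (0:ℂ)) (ε := 1)
      simp at this
      rw [this] at hy
      exact hy
    simpa [FormalMultilinearSeries.ofScalars_apply_eq, mul_comm] using hf y hy'

lemma zf_deriv (f : ℂ → ℂ) (a : ℕ → ℂ)
    (hf : ∀ z ∈ Metric.ball (0 : ℂ) 1, HasSum (fun k => a k * z ^ k) (f z)) :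
    ∀ z ∈ Metric.ball (0 : ℂ) 1,
      HasSum (fun k : ℕ => ((k + 1 : ℕ) : ℂ) * a (k + 1) * z ^ k) (deriv f z) := by
  have h1 := zf_fps f a hf
  have hd : DifferentiableOn ℂ f (Metric.ball 0 1) := by
    have := h1.differentiableOn
    have h2 := Metric.eball_ofReal (x := (0:ℂ)) (ε := 1)
    simp at h2
    rwa [h2] at this
  have hco : ∀ k, iteratedDeriv k f 0 = k.factorial * a k := by
    intro k
    have h3 := h1.hasFPowerSeriesAt.eq_formalMultilinearSeries h1.analyticAt.hasFPowerSeriesAt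
    have h4 := congrArg (fun p => FormalMultilinearSeries.coeff p k) h3
    simp only [FormalMultilinearSeries.coeff_ofScalars] at h4
    have : (k.factorial : ℂ) ≠ 0 := by exact_mod_cast k.factorial_ne_zero
    rw [h4]; field_simp
  intro z hz
  have h5 := Complex.hasSum_taylorSeries_on_ball (hd.deriv Metric.isOpen_ball) hz
  refine h5.congr_zf fun k => ?_
  rw [← iteratedDeriv_succ', hco, Nat.factorial_succ]
  have : (k.factorial : ℂ) ≠ 0 := by exact_mod_cast k.factorial_ne_zero
  simp only [smul_eq_mul, sub_zero]
  push_cast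
  field_simp

lemma zf_p (f : ℂ → ℂ) (a : ℕ → ℂ)
    (hf : ∀ z ∈ Metric.ball (0 : ℂ) 1, HasSum (fun k => a k * z ^ k) (f z)) :
    ∀ z ∈ Metric.ball (0 : ℂ) 1,
      HasSum (fun k : ℕ => (((k + 1 : ℕ) : ℂ) * a (k + 1) - k * a k) * z ^ k)
        ((1 - z) * deriv f z) := by
  intro z hz
  have h1 := zf_deriv f a hf z hz
  have h2 : HasSum (fun k : ℕ => (k : ℂ) * a k * z ^ k) (z * deriv f z) := by
    rw [← hasSum_nat_add_iff' 1]
    have := h1.mul_left z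
    simp only [Finset.range_one, Finset.sum_singleton, Nat.cast_zero, zero_mul, sub_zero]
    refine this.congr_zf fun k => ?_
    ring
  have h3 := h1.sub h2
  rw [show (1 - z) * deriv f z = deriv f z - z * deriv f z by ring]
  refine h3.congr_zf fun k => ?_
  ring

lemma zf_final (b : ℕ → ℂ) (l : ℕ) (h2 : ∀ k, 1 ≤ k → ‖b k‖ ≤ 2) (h0 : b 0 = 1)
    (hl : ∀ i j, 1 ≤ i → 1 ≤ j → ‖b (i + j) - b i * b j‖ ≤ 2) :
    ‖(∑ k ∈ Finset.range (l + 2), b k) ^ 2 - ∑ k ∈ Finset.range (2 * l + 3), b k‖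
      ≤ 4 * (l + 1 : ℝ) ^ 2 := by
  set S := ∑ i ∈ Finset.range (l + 1), b (i + 1) with hS
  set S' := ∑ i ∈ Finset.range l, b (i + 1) with hS'
  have hSS : S = S' + b (l + 1) := Finset.sum_range_succ _ _
  have hA : ∑ k ∈ Finset.range (l + 2), b k = 1 + S := by
    rw [Finset.sum_range_succ', h0, add_comm]
  have hB : ∑ k ∈ Finset.range (2 * l + 3), b k
      = 1 + S + ∑ i ∈ Finset.range (l + 1), b ((i + 1) + (l + 1)) := by
    rw [← hA, show 2 * l + 3 = (l + 2) + (l + 1) by ring, Finset.sum_range_add]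
    congr 1
    refine Finset.sum_congr rfl fun i _ => ?_
    congr 1; ring
  have key : (1 + S) ^ 2 - (1 + S + ∑ i ∈ Finset.range (l + 1), b ((i + 1) + (l + 1)))
      = S * S' + S - ∑ i ∈ Finset.range (l + 1),
          (b ((i + 1) + (l + 1)) - b (i + 1) * b (l + 1)) := by
    rw [Finset.sum_sub_distrib, ← Finset.sum_mul, ← hS]
    linear_combination S * hSS
  rw [hA, hB, key]
  have e1 : ‖S‖ ≤ 2 * (l + 1 : ℝ) := by
    refine (norm_sum_le_of_le _ (fun i _ => h2 (i + 1) (by omega))).trans ?_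
    simp; linarith
  have e2 : ‖S'‖ ≤ 2 * (l : ℝ) := by
    refine (norm_sum_le_of_le _ (fun i _ => h2 (i + 1) (by omega))).trans ?_
    simp; linarith
  have e3 : ‖∑ i ∈ Finset.range (l + 1),
          (b ((i + 1) + (l + 1)) - b (i + 1) * b (l + 1))‖ ≤ 2 * (l + 1 : ℝ) := by
    refine (norm_sum_le_of_le _ (fun i _ => hl (i + 1) (l + 1) (by omega) (by omega))).trans ?_
    simp; linarith
  have e4 : ‖S * S'‖ ≤ (2 * (l + 1 : ℝ)) * (2 * l) := by
    rw [norm_mul]; gcongr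
  refine (norm_sub_le _ _).trans ?_
  have := norm_add_le (S * S') S
  nlinarith

lemma zf_main (a : ℕ → ℂ) (b : ℕ → ℂ)
    (hb : ∀ k : ℕ, b k = ((k + 1 : ℕ) : ℂ) * a (k + 1) - k * a k)
    (h2 : ∀ k, 1 ≤ k → ‖b k‖ ≤ 2) (h0 : b 0 = 1)
    (hl : ∀ i j, 1 ≤ i → 1 ≤ j → ‖b (i + j) - b i * b j‖ ≤ 2)
    (n : ℕ) (hn : 2 ≤ n) (μ : ℝ) (hμ : (n : ℝ) ^ 2 / (2 * (n : ℝ) - 1) ≤ μ) :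
    ‖(μ : ℂ) * a n ^ 2 - a (2 * n - 1)‖ ≤
      μ * (2 * (n : ℝ) - 1) ^ 2 / (n : ℝ) ^ 2 + (3 - 4 * (n : ℝ)) / (2 * (n : ℝ) - 1) := by
  have hsum : ∀ k : ℕ, ∑ i ∈ Finset.range k, b i = k * a k := by
    intro k
    induction k with
    | zero => simp
    | succ k ih => rw [Finset.sum_range_succ, ih, hb]; ring
  obtain ⟨l, rfl⟩ : ∃ l, n = l + 2 := ⟨n - 2, by omega⟩
  have hfin := zf_final b l h2 h0 hl
  have hAn : ‖∑ i ∈ Finset.range (l + 2), b i‖ ≤ 2 * (l + 1 : ℝ) + 1 := by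
    rw [Finset.sum_range_succ', h0]
    refine (norm_add_le _ _).trans ?_
    have := norm_sum_le_of_le (Finset.range (l+1)) (fun i _ => h2 (i + 1) (by omega))
    simp at this ⊢
    linarith
  rw [hsum, hsum] at hfin
  rw [hsum] at hAn
  rw [show 2 * (l + 2) - 1 = 2 * l + 3 by omega]
  have hN : (0 : ℝ) < (l : ℝ) + 2 := by positivity
  have hM : (0 : ℝ) < 2 * (l : ℝ) + 3 := by positivity
  have hMc : (2 * (l : ℂ) + 3) ≠ 0 := by exact_mod_cast hM.ne'
  have hNc : ((l : ℂ) + 2) ≠ 0 := by exact_mod_cast hN.ne'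
  push_cast at *
  have hM' : 2 * ((l : ℝ) + 2) - 1 = 2 * l + 3 := by ring
  rw [hM'] at hμ ⊢
  set μ₀ : ℝ := ((l : ℝ) + 2) ^ 2 / (2 * (l : ℝ) + 3) with hμ0
  have hdec : (μ : ℂ) * a (l + 2) ^ 2 - a (2 * l + 3)
      = ((μ - μ₀ : ℝ) : ℂ) / ((l + 2 : ℝ) : ℂ) ^ 2 * (((l : ℂ) + 2) * a (l + 2)) ^ 2
        + ((((l : ℂ) + 2) * a (l + 2)) ^ 2 - (2 * (l : ℂ) + 3) * a (2 * l + 3))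
          / ((2 * l + 3 : ℝ) : ℂ) := by
    rw [hμ0]; push_cast; exact zf_alg _ _ _ _ _ hMc hNc
  rw [hdec]
  refine (norm_add_le _ _).trans ?_
  rw [norm_mul, norm_div, norm_div, norm_pow, norm_pow, Complex.norm_real, Complex.norm_real,
    Complex.norm_real, Real.norm_of_nonneg (sub_nonneg.2 hμ), Real.norm_of_nonneg hN.le,
    Real.norm_of_nonneg hM.le]
  have t1 : (μ - μ₀) / ((l : ℝ) + 2) ^ 2 * ‖((l : ℂ) + 2) * a (l + 2)‖ ^ 2
      ≤ (μ - μ₀) / ((l : ℝ) + 2) ^ 2 * (2 * (l + 1 : ℝ) + 1) ^ 2 := by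
    have := sub_nonneg.2 hμ
    gcongr
  refine (add_le_add t1 (div_le_div_of_nonneg_right hfin hM.le)).trans (le_of_eq ?_)
  rw [hμ0]; field_simp; ring

open Complex in
lemma zf_exp (m : ℤ) : ∫ θ in (0:ℝ)..(2 * Real.pi), exp (m * θ * I)
    = (if m = 0 then 2 * Real.pi else 0 : ℂ) := by
  split_ifs with h
  · simp [h]
  · have hc : (m : ℂ) * I ≠ 0 := by simp [h]
    have := integral_exp_mul_complex (a := 0) (b := 2 * Real.pi) hc
    rw [show (fun θ : ℝ => exp (m * θ * I)) = fun θ : ℝ => exp (m * I * θ) by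
      funext θ; congr 1; ring, this]
    have : exp (m * I * ((2 * Real.pi : ℝ) : ℂ)) = 1 := by
      rw [exp_eq_one_iff]; exact ⟨m, by push_cast; ring⟩
    rw [this]; simp

lemma zf_ball (r : ℝ) (hr0 : 0 < r) (hr : r < 1) (θ : ℝ) :
    circleMap 0 r θ ∈ Metric.ball (0 : ℂ) 1 := by
  simp [abs_of_pos hr0, hr]

open Complex in
lemma zf_coef (P : ℂ → ℂ) (b : ℕ → ℂ)
    (hP : ∀ z ∈ Metric.ball (0 : ℂ) 1, HasSum (fun k => b k * z ^ k) (P z))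
    (r : ℝ) (hr0 : 0 < r) (hr : r < 1) (m : ℤ) :
    HasSum (fun k : ℕ => b k * r ^ k * (if (k + m : ℤ) = 0 then 2 * Real.pi else 0 : ℂ))
      (∫ θ in (0:ℝ)..(2 * Real.pi), P (circleMap 0 r θ) * exp (m * θ * I)) := by
  have hs := (hP (r : ℂ) (by simpa [abs_of_pos hr0] using hr)).summable.norm
  have := intervalIntegral.hasSum_integral_of_dominated_convergence (μ := MeasureTheory.volume)
    (a := 0) (b := 2 * Real.pi)
    (F := fun (k : ℕ) (θ : ℝ) => b k * (circleMap 0 r θ) ^ k * exp (m * θ * I))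
    (f := fun θ : ℝ => P (circleMap 0 r θ) * exp (m * θ * I))
    (fun k _ => ‖b k * (r : ℂ) ^ k‖) ?_ ?_ ?_ ?_ ?_
  · refine this.congr_zf fun k => ?_
    have h := zf_exp (k + m)
    rw [← h, ← intervalIntegral.integral_const_mul]
    congr 1
    funext θ
    simp only [circleMap, zero_add, mul_pow]
    have e : exp (((k + m : ℤ) : ℂ) * θ * I) = exp (k * (θ * I)) * exp (m * θ * I) := by
      rw [← exp_add]; congr 1; push_cast; ring
    rw [← exp_nat_mul, e]
    ring
  · intro k
    apply Continuous.aestronglyMeasurable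
    fun_prop
  · intro k
    refine Filter.Eventually.of_forall fun θ _ => ?_
    have : ‖exp (m * θ * I)‖ = 1 := by
      have := norm_exp_ofReal_mul_I (m * θ); push_cast at this; exact this
    rw [norm_mul, this]
    simp
  · exact Filter.Eventually.of_forall fun θ _ => hs
  · exact intervalIntegrable_const
  · refine Filter.Eventually.of_forall fun θ _ => ?_
    exact (hP _ (zf_ball r hr0 hr θ)).mul_right _

lemma zf_cont (P : ℂ → ℂ) (b : ℕ → ℂ)
    (hP : ∀ z ∈ Metric.ball (0 : ℂ) 1, HasSum (fun k => b k * z ^ k) (P z))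
    (r : ℝ) (hr0 : 0 < r) (hr : r < 1) : Continuous fun θ : ℝ => P (circleMap 0 r θ) := by
  have h1 := (zf_fps P b hP).continuousOn
  have h2 := Metric.eball_ofReal (x := (0:ℂ)) (ε := 1)
  simp at h2
  rw [h2] at h1
  exact h1.comp_continuous (continuous_circleMap 0 r) (zf_ball r hr0 hr)

open Complex ComplexConjugate in
lemma zf_re (P : ℂ → ℂ) (b : ℕ → ℂ) (hb0 : b 0 = 1)
    (hP : ∀ z ∈ Metric.ball (0 : ℂ) 1, HasSum (fun k => b k * z ^ k) (P z))
    (r : ℝ) (hr0 : 0 < r) (hr : r < 1) (k : ℕ) :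
    ∫ θ in (0:ℝ)..(2 * Real.pi), exp (-(k * θ * I)) * ((P (circleMap 0 r θ)).re : ℂ)
      = (if k = 0 then 2 * Real.pi else Real.pi * (b k * r ^ k) : ℂ) := by
  have hc := zf_cont P b hP r hr0 hr
  have h1 := zf_coef P b hP r hr0 hr (-k)
  have h2 := zf_coef P b hP r hr0 hr k
  have e1 := h1.unique (hasSum_single k (fun j hj => by
    rw [if_neg (by omega), mul_zero]))
  have e2 := h2.unique (hasSum_single 0 (fun j hj => by
    rw [if_neg (by omega), mul_zero]))
  have hpt : ∀ θ : ℝ, exp (-(k * θ * I)) * ((P (circleMap 0 r θ)).re : ℂ)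
      = (1 / 2) * (P (circleMap 0 r θ) * exp ((-k : ℤ) * θ * I))
        + (1 / 2) * conj (P (circleMap 0 r θ) * exp ((k : ℤ) * θ * I)) := by
    intro θ
    rw [re_eq_add_conj, map_mul, ← exp_conj]
    simp only [map_mul, conj_ofReal, conj_I]
    push_cast
    rw [map_natCast, show (k : ℂ) * θ * -I = -(k * θ * I) by ring,
      show -(k : ℂ) * θ * I = -(k * θ * I) by ring]
    ring
  simp_rw [hpt]
  rw [intervalIntegral.integral_add, intervalIntegral.integral_const_mul,
    intervalIntegral.integral_const_mul, intervalIntegral.intervalIntegral_conj, e1, e2]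
  · by_cases hk : k = 0
    · subst hk
      have : conj (2 : ℂ) = 2 := map_ofNat _ 2
      simp [hb0, this]; ring
    · simp [hk]; ring
  · apply Continuous.intervalIntegrable
    exact continuous_const.mul (hc.mul (by fun_prop))
  · apply Continuous.intervalIntegrable
    exact continuous_const.mul (continuous_conj.comp (hc.mul (by fun_prop)))

open Complex ComplexConjugate in
/-- Livingston-type inequality, abstract version with a density. -/
lemma zf_liv (h : ℝ → ℝ) (hc : Continuous h) (hpos : ∀ θ, 0 ≤ h θ) (c : ℕ → ℂ)
    (hI : ∀ k : ℕ, ∫ θ in (0:ℝ)..(2 * Real.pi), exp (-(k * θ * I)) * (h θ : ℂ)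
      = 2 * Real.pi * c k) (h0 : c 0 = 1) (i j : ℕ) :
    ‖c (i + j) - 2 * c i * c j‖ ≤ 1 ∧ ‖c i‖ ≤ 1 := by
  have hpi := Real.pi_pos
  have hne : ∀ (k : ℕ) (θ : ℝ), ‖exp (-(k * θ * I))‖ = 1 := by
    intro k θ
    have := norm_exp_ofReal_mul_I (-(k * θ)); push_cast at this
    rw [← this]; congr 2; ring
  have hh : ∫ θ in (0:ℝ)..(2 * Real.pi), h θ = 2 * Real.pi := by
    have := hI 0
    simp only [Nat.cast_zero, zero_mul, neg_zero, exp_zero, one_mul, h0, mul_one] at this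
    rw [intervalIntegral.integral_ofReal] at this
    exact_mod_cast this
  constructor
  · have e1 : ∫ θ in (0:ℝ)..(2 * Real.pi),
        exp (-(i * θ * I)) * (exp (-(j * θ * I)) - 2 * c j) * (h θ : ℂ)
        = 2 * Real.pi * (c (i + j) - 2 * c i * c j) := by
      have : ∀ θ : ℝ, exp (-(i * θ * I)) * (exp (-(j * θ * I)) - 2 * c j) * (h θ : ℂ)
          = exp (-((i + j : ℕ) * θ * I)) * (h θ : ℂ)
            - 2 * c j * (exp (-(i * θ * I)) * (h θ : ℂ)) := by
        intro θ
        rw [show -(((i + j : ℕ) : ℂ) * θ * I) = -(i * θ * I) + -(j * θ * I) by push_cast; ring,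
          exp_add]
        ring
      simp_rw [this]
      rw [intervalIntegral.integral_sub, intervalIntegral.integral_const_mul, hI, hI]
      · ring
      · apply Continuous.intervalIntegrable; fun_prop
      · apply Continuous.intervalIntegrable; fun_prop
    have e2 : ∫ θ in (0:ℝ)..(2 * Real.pi),
        ((1 + 2 * ‖c j‖ ^ 2) * h θ - 2 * (conj (c j) * (exp (-(j * θ * I)) * (h θ : ℂ))).re)
        = 2 * Real.pi := by
      have e3 : ∫ θ in (0:ℝ)..(2 * Real.pi), (conj (c j) * (exp (-(j * θ * I)) * (h θ : ℂ))).re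
          = (∫ θ in (0:ℝ)..(2 * Real.pi), conj (c j) * (exp (-(j * θ * I)) * (h θ : ℂ))).re := by
        refine reCLM.intervalIntegral_comp_comm
          (f := fun θ : ℝ => conj (c j) * (exp (-(j * θ * I)) * (h θ : ℂ))) ?_
        apply Continuous.intervalIntegrable; fun_prop
      rw [intervalIntegral.integral_sub, intervalIntegral.integral_const_mul,
        intervalIntegral.integral_const_mul, hh, e3, intervalIntegral.integral_const_mul, hI]
      · have : conj (c j) * (2 * Real.pi * c j) = ((2 * Real.pi * ‖c j‖ ^ 2 : ℝ) : ℂ) := by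
          push_cast; rw [← conj_mul']; ring
        rw [this, ofReal_re]; ring
      · apply Continuous.intervalIntegrable; fun_prop
      · apply Continuous.intervalIntegrable; fun_prop
    have e4 : ‖∫ θ in (0:ℝ)..(2 * Real.pi),
        exp (-(i * θ * I)) * (exp (-(j * θ * I)) - 2 * c j) * (h θ : ℂ)‖ ≤ 2 * Real.pi := by
      refine le_trans ?_ e2.le
      refine intervalIntegral.norm_integral_le_of_norm_le (by positivity) ?_ ?_
      · refine Filter.Eventually.of_forall fun θ _ => ?_
        rw [norm_mul, norm_mul, hne, one_mul, norm_real, Real.norm_of_nonneg (hpos θ)]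
        have q1 : (conj (c j) * (exp (-(j * θ * I)) * (h θ : ℂ))).re
            = (exp (-(j * θ * I)) * conj (c j)).re * h θ := by
          rw [← re_mul_ofReal]; congr 1; ring
        have q2 : ‖exp (-(j * θ * I)) - 2 * c j‖ ^ 2
            = 1 + 4 * ‖c j‖ ^ 2 - 4 * (exp (-(j * θ * I)) * conj (c j)).re := by
          have := hne j θ
          rw [Complex.sq_norm, normSq_sub, ← Complex.sq_norm, ← Complex.sq_norm, this, norm_mul]
          simp; ring
        rw [q1]
        have q3 : ‖exp (-(j * θ * I)) - 2 * c j‖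
            ≤ 1 + 2 * ‖c j‖ ^ 2 - 2 * (exp (-(j * θ * I)) * conj (c j)).re := by
          nlinarith [sq_nonneg (‖exp (-(j * θ * I)) - 2 * c j‖ - 1)]
        have := mul_le_mul_of_nonneg_right q3 (hpos θ)
        linarith
      · apply Continuous.intervalIntegrable; fun_prop
    rw [e1, norm_mul] at e4
    have : ‖(2 * Real.pi : ℂ)‖ = 2 * Real.pi := by simp [abs_of_pos hpi]
    rw [this] at e4
    exact le_of_mul_le_mul_left (by linarith) (by positivity : 0 < 2 * Real.pi)
  · have e4 : ‖∫ θ in (0:ℝ)..(2 * Real.pi), exp (-(i * θ * I)) * (h θ : ℂ)‖ ≤ 2 * Real.pi := by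
      refine le_trans ?_ hh.le
      refine intervalIntegral.norm_integral_le_of_norm_le (by positivity) ?_ ?_
      · refine Filter.Eventually.of_forall fun θ _ => ?_
        rw [norm_mul, hne, one_mul, norm_real, Real.norm_of_nonneg (hpos θ)]
      · exact hc.intervalIntegrable _ _
    rw [hI, norm_mul] at e4
    have : ‖(2 * Real.pi : ℂ)‖ = 2 * Real.pi := by simp [abs_of_pos hpi]
    rw [this] at e4
    exact le_of_mul_le_mul_left (by linarith) (by positivity : 0 < 2 * Real.pi)

/-- Passing to the limit `r → 1`. -/
lemma zf_lim (x : ℂ) (k : ℕ) (h : ∀ r : ℝ, 0 < r → r < 1 → ‖x‖ * r ^ k ≤ 2) : ‖x‖ ≤ 2 := by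
  have ht : Filter.Tendsto (fun r : ℝ => ‖x‖ * r ^ k) (nhdsWithin 1 (Set.Iio 1))
      (nhds (‖x‖ * 1 ^ k)) := by
    apply tendsto_nhdsWithin_of_tendsto_nhds
    exact Continuous.tendsto (by fun_prop) 1
  rw [one_pow, mul_one] at ht
  refine le_of_tendsto ht ?_
  filter_upwards [Ioo_mem_nhdsLT (show (0:ℝ) < 1 by norm_num)] with r hr
  exact h r hr.1 hr.2

lemma zf_carath (P : ℂ → ℂ) (b : ℕ → ℂ) (hb0 : b 0 = 1)
    (hP : ∀ z ∈ Metric.ball (0 : ℂ) 1, HasSum (fun k => b k * z ^ k) (P z))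
    (hre : ∀ z ∈ Metric.ball (0 : ℂ) 1, 0 < (P z).re) (i j : ℕ) (hi : 1 ≤ i) (hj : 1 ≤ j) :
    ‖b (i + j) - b i * b j‖ ≤ 2 ∧ ‖b i‖ ≤ 2 := by
  have key : ∀ r : ℝ, 0 < r → r < 1 →
      ‖b (i + j) - b i * b j‖ * r ^ (i + j) ≤ 2 ∧ ‖b i‖ * r ^ i ≤ 2 := by
    intro r hr0 hr
    have hz := zf_liv (fun θ => (P (circleMap 0 r θ)).re)
      (Complex.continuous_re.comp (zf_cont P b hP r hr0 hr))
      (fun θ => (hre _ (zf_ball r hr0 hr θ)).le)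
      (fun k => if k = 0 then 1 else b k * r ^ k / 2)
      (fun k => by
        rw [zf_re P b hb0 hP r hr0 hr k]
        split_ifs
        · ring
        · ring) (by simp) i j
    have hi' : i ≠ 0 := by omega
    have hj' : j ≠ 0 := by omega
    simp only [hi', hj', Nat.add_eq_zero_iff, false_and, if_false] at hz
    obtain ⟨z1, z2⟩ := hz
    have n1 : ∀ k : ℕ, ‖(r : ℂ) ^ k‖ = r ^ k := by
      intro k; rw [norm_pow, Complex.norm_real, Real.norm_of_nonneg hr0.le]
    constructor
    · have : b (i + j) * (r : ℂ) ^ (i + j) / 2 - 2 * (b i * r ^ i / 2) * (b j * r ^ j / 2)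
          = (b (i + j) - b i * b j) * r ^ (i + j) / 2 := by ring
      rw [this, norm_div, norm_mul, n1] at z1
      simp at z1; linarith
    · rw [norm_div, norm_mul, n1] at z2
      simp at z2; linarith
  exact ⟨zf_lim _ (i + j) fun r h0 h1 => (key r h0 h1).1, zf_lim _ i fun r h0 h1 => (key r h0 h1).2⟩

theorem zalcman_F1_zero_diagonal
    (f : ℂ → ℂ) (a : ℕ → ℂ)
    (ha0 : a 0 = 0) (ha1 : a 1 = 1)
    (hf : ∀ z ∈ Metric.ball (0 : ℂ) 1, HasSum (fun k => a k * z ^ k) (f z))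
    (hre : ∀ z ∈ Metric.ball (0 : ℂ) 1, 0 < ((1 - z) * deriv f z).re)
    (n : ℕ) (hn : 2 ≤ n) (μ : ℝ) (hμ : (n : ℝ) ^ 2 / (2 * (n : ℝ) - 1) ≤ μ) :
    ‖(μ : ℂ) * a n ^ 2 - a (2 * n - 1)‖ ≤
      μ * (2 * (n : ℝ) - 1) ^ 2 / (n : ℝ) ^ 2 + (3 - 4 * (n : ℝ)) / (2 * (n : ℝ) - 1) := by
  have hP := zf_p f a hf
  have hb0 : ((0 + 1 : ℕ) : ℂ) * a (0 + 1) - (0 : ℕ) * a 0 = 1 := by simp [ha1]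
  have hC := zf_carath (fun z => (1 - z) * deriv f z)
    (fun k : ℕ => ((k + 1 : ℕ) : ℂ) * a (k + 1) - k * a k) hb0 hP hre
  exact zf_main a (fun k : ℕ => ((k + 1 : ℕ) : ℂ) * a (k + 1) - k * a k) (fun _ => rfl)
    (fun k hk => (hC k 1 hk le_rfl).2) hb0 (fun i j hi hj => (hC i j hi hj).1) n hn μ hμ
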